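/- Let n, r, k be positive integers with k ≤ r, let b ∈ ℝ^{n×n} be symmetric, and let m > 0. Let Q(V) = (1/2m) Σ_{i,j} b_{ij} ⟨vᵢ, vⱼ⟩, let Ωᵢ = {v ∈ ℝ^r : v ≥ 0 entrywise, ‖v‖₂ = 1, card(v) ≤ k}, let Ω = Ω₁ × ⋯ × Ωₙ, and let Q* = max_{V∈Ω} Q(V). For V ∈ Ω define the projected gradient grad(V) = P_Ω(V + ∇Q(V)) − V, where ∇Q(V) has blocks gᵢ = (1/m) Σ_{j≠i} b_{ij} vⱼ and P_Ω is any (measurable) blockwise selection of Euclidean projections onto Ω. Let i₀, i₁, i₂, … be independent uniformly random indices in {1,…,n}, let V⁰ ∈ Ω, and define V^{t+1} to agree with V^t except in block i_t, where V^{t+1}_{i_t} is an exact maximizer of Q over Ω_{i_t} with the other blocks fixed (given by a fixed measurable selection). Then for every T ≥ 1, min_{0≤t<T} E[‖grad(V^t)‖₂²] ≤ (2n/T) (Q* − Q(V⁰)); in particular the expected squared projected gradient converges to zero at rate O(1/T). -/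

import Mathlib

/-- The number of nonzero entries of a vector `v ∈ ℝ^r`. -/
noncomputable def card {r : ℕ} (v : EuclideanSpace ℝ (Fin r)) : ℕ :=
  {t | v t ≠ 0}.ncard

/-- The per-block feasible set `Ωᵢ = {v ∈ ℝ^r : v ≥ 0, ‖v‖ = 1, card v ≤ k}`. -/
def feas (r k : ℕ) : Set (EuclideanSpace ℝ (Fin r)) :=
  {v | (∀ t, 0 ≤ v t) ∧ ‖v‖ = 1 ∧ card v ≤ k}

/-- The generalized modularity objective `Q(V) = (1/2m) Σ_{i,j} b_{ij} ⟨vᵢ, vⱼ⟩`. -/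
noncomputable def Qfun {n r : ℕ} (b : Fin n → Fin n → ℝ) (m : ℝ)
    (V : Fin n → EuclideanSpace ℝ (Fin r)) : ℝ :=
  (1 / (2 * m)) * ∑ i, ∑ j, b i j * ∑ t, V i t * V j t

/-- Block `i` of the gradient `∇Q(V)`: `gᵢ = (1/m) Σ_{j≠i} b_{ij} vⱼ`. -/
noncomputable def gradBlock {n r : ℕ} (b : Fin n → Fin n → ℝ) (m : ℝ)
    (V : Fin n → EuclideanSpace ℝ (Fin r)) (i : Fin n) : EuclideanSpace ℝ (Fin r) :=
  (1 / m) • ∑ j ∈ Finset.univ.erase i, b i j • V j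

/-- The iterate of exact blockwise coordinate ascent along a list of coordinate indices:
at each step the block given by the next index is replaced by the exact maximizer
(given by the selection `sel`) of `Q` over that block with all other blocks fixed. -/
noncomputable def iter {n r : ℕ}
    (sel : (Fin n → EuclideanSpace ℝ (Fin r)) → Fin n → EuclideanSpace ℝ (Fin r))
    (V0 : Fin n → EuclideanSpace ℝ (Fin r)) (l : List (Fin n)) :
    Fin n → EuclideanSpace ℝ (Fin r) :=
  l.foldl (fun W i => Function.update W i (sel W i)) V0

/-- The squared norm of the projected gradient `grad(V) = P_Ω(V + ∇Q(V)) − V`, where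
the projection onto the product set `Ω = Ω₁ × ⋯ × Ωₙ` is taken blockwise via the
projection selection `proj`, and `‖V‖² = Σᵢ ‖vᵢ‖²` on `(ℝ^r)^n`. -/
noncomputable def gradNormSq {n r : ℕ} (b : Fin n → Fin n → ℝ) (m : ℝ)
    (proj : Fin n → EuclideanSpace ℝ (Fin r) → EuclideanSpace ℝ (Fin r))
    (V : Fin n → EuclideanSpace ℝ (Fin r)) : ℝ :=
  ∑ i, ‖proj i (V i + gradBlock b m V i) - V i‖ ^ 2

/-!
In `Q` the block `i` enters only through `b i i * ‖V i‖ ^ 2` and linearly through `⟪V i, gᵢ⟫`, and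
on a sphere the first term is constant. Exact maximization over a block therefore gains at least
`⟪p - V i, gᵢ⟫` for the projection `p` of `V i + gᵢ`, and as `p` is no farther from `V i + gᵢ`
than `V i` itself is, this gain is at least `‖p - V i‖ ^ 2 / 2`. Averaging over the random block,
the expected squared projected gradient is at most `2 n` times the expected increase of `Q`, and
these increases telescope to at most `Q* - Q(V⁰)`.
-/

open Finset Function
open scoped BigOperators RealInnerProductSpace

section OrbitMean

variable {ι X : Type*} [Fintype ι]

/-- The expectation of `f` at time `t` along the Markov chain that starts at `x` and moves from `y`
to `step y i` for a uniformly random `i`, as an average over all index sequences of length `t`. -/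
noncomputable def orbitMean (step : X → ι → X) (x : X) (f : X → ℝ) (t : ℕ) : ℝ :=
  𝔼 s : Fin t → ι, f ((List.ofFn s).foldl step x)

variable {step : X → ι → X} {x : X}

theorem orbitMean_zero (f : X → ℝ) : orbitMean step x f 0 = f x := by
  simp [orbitMean]

theorem orbitMean_succ (f : X → ℝ) (t : ℕ) :
    orbitMean step x f (t + 1) = orbitMean step x (fun y ↦ 𝔼 i, f (step y i)) t := by
  calc orbitMean step x f (t + 1)
      = 𝔼 p : ι × (Fin t → ι), f (step ((List.ofFn p.2).foldl step x) p.1) :=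
        (Fintype.expect_equiv (Fin.snocEquiv fun _ ↦ ι) _ _ fun p ↦ by
          rw [List.ofFn_succ']
          simp [Fin.snocEquiv]).symm
    _ = orbitMean step x (fun y ↦ 𝔼 i, f (step y i)) t := by
        rw [orbitMean, ← univ_product_univ, expect_product, expect_comm]

theorem orbitMean_mul_sub (c : ℝ) (f g : X → ℝ) (t : ℕ) :
    orbitMean step x (fun y ↦ c * (f y - g y)) t =
      c * (orbitMean step x f t - orbitMean step x g t) := by
  simp only [orbitMean, ← expect_sub_distrib, mul_expect]

theorem orbitMean_eq_sum_div (f : X → ℝ) (t : ℕ) :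
    orbitMean step x f t =
      (∑ s : Fin t → ι, f (((List.finRange t).map s).foldl step x)) / (Fintype.card ι : ℝ) ^ t := by
  simp [orbitMean, Fintype.expect_eq_sum_div_card, List.ofFn_eq_map]

variable {S : Set X}

theorem orbitMean_mono (hS : ∀ y ∈ S, ∀ i, step y i ∈ S) (hx : x ∈ S) {f g : X → ℝ}
    (hfg : ∀ y ∈ S, f y ≤ g y) (t : ℕ) : orbitMean step x f t ≤ orbitMean step x g t :=
  expect_le_expect fun s _ ↦
    hfg _ (List.foldlRecOn (motive := (· ∈ S)) (List.ofFn s) step hx fun y hy i _ ↦ hS y hy i)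

theorem orbitMean_le [Nonempty ι] (hS : ∀ y ∈ S, ∀ i, step y i ∈ S) (hx : x ∈ S) {f : X → ℝ}
    {B : ℝ} (hf : ∀ y ∈ S, f y ≤ B) (t : ℕ) : orbitMean step x f t ≤ B :=
  (orbitMean_mono hS hx hf t).trans_eq (Fintype.expect_const B)

theorem exists_orbitMean_le_of_drift [Nonempty ι] (hS : ∀ y ∈ S, ∀ i, step y i ∈ S) (hx : x ∈ S)
    {G Φ : X → ℝ} {c B : ℝ} (hc : 0 ≤ c) (hΦ : ∀ y ∈ S, Φ y ≤ B)
    (hG : ∀ y ∈ S, G y ≤ c * ((𝔼 i, Φ (step y i)) - Φ y)) {T : ℕ} (hT : 0 < T) :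
    ∃ t < T, orbitMean step x G t ≤ c / T * (B - Φ x) := by
  have drift (t : ℕ) :
      orbitMean step x G t ≤ c * (orbitMean step x Φ (t + 1) - orbitMean step x Φ t) := by
    rw [orbitMean_succ, ← orbitMean_mul_sub]
    exact orbitMean_mono hS hx hG t
  have sum_le : ∑ t ∈ range T, orbitMean step x G t ≤ ∑ _t ∈ range T, c / T * (B - Φ x) :=
    calc ∑ t ∈ range T, orbitMean step x G t
        ≤ ∑ t ∈ range T, c * (orbitMean step x Φ (t + 1) - orbitMean step x Φ t) :=
          sum_le_sum fun t _ ↦ drift t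
      _ = c * (orbitMean step x Φ T - Φ x) := by
          rw [← mul_sum, sum_range_sub, orbitMean_zero]
      _ ≤ c * (B - Φ x) := by gcongr; exact orbitMean_le hS hx hΦ T
      _ = ∑ _t ∈ range T, c / T * (B - Φ x) := by
          rw [sum_const, card_range, nsmul_eq_mul]
          field_simp
  simpa using exists_le_of_sum_le (nonempty_range_iff.2 hT.ne') sum_le

end OrbitMean

section PairEnergy

variable {ι E : Type*} [Fintype ι] [DecidableEq ι] [NormedAddCommGroup E] [InnerProductSpace ℝ E]

/-- The quadratic form `∑ᵢⱼ bᵢⱼ ⟪Vᵢ, Vⱼ⟫` on block vectors; `Qfun` is `1 / (2 * m)` times it. -/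
def pairEnergy (b : ι → ι → ℝ) (V : ι → E) : ℝ :=
  ∑ i, ∑ j, b i j * ⟪V i, V j⟫

theorem pairEnergy_eq_add_sum_erase {b : ι → ι → ℝ} (hb : ∀ i j, b i j = b j i) (V : ι → E)
    (i : ι) :
    pairEnergy b V = b i i * ‖V i‖ ^ 2 + 2 * ⟪V i, ∑ j ∈ univ.erase i, b i j • V j⟫ +
      ∑ x ∈ univ.erase i, ∑ y ∈ univ.erase i, b x y * ⟪V x, V y⟫ := by
  have split_row (x : ι) : ∑ y, b x y * ⟪V x, V y⟫ =
      b x i * ⟪V x, V i⟫ + ∑ y ∈ univ.erase i, b x y * ⟪V x, V y⟫ :=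
    (add_sum_erase _ _ (mem_univ i)).symm
  have row : ∑ j ∈ univ.erase i, b i j * ⟪V i, V j⟫ = ⟪V i, ∑ j ∈ univ.erase i, b i j • V j⟫ := by
    simp only [inner_sum, real_inner_smul_right]
  have column : ∑ x ∈ univ.erase i, b x i * ⟪V x, V i⟫ =
      ⟪V i, ∑ j ∈ univ.erase i, b i j • V j⟫ := by
    rw [← row]
    exact sum_congr rfl fun x _ ↦ by rw [hb x i, real_inner_comm]
  rw [pairEnergy, ← add_sum_erase _ _ (mem_univ i)]
  simp only [split_row, sum_add_distrib, row, column, real_inner_self_eq_norm_sq]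
  ring

theorem pairEnergy_update_sub {b : ι → ι → ℝ} (hb : ∀ i j, b i j = b j i) (V : ι → E) (i : ι)
    (u : E) :
    pairEnergy b (update V i u) - pairEnergy b V =
      b i i * (‖u‖ ^ 2 - ‖V i‖ ^ 2) + 2 * ⟪u - V i, ∑ j ∈ univ.erase i, b i j • V j⟫ := by
  have update_eq : ∀ j ∈ univ.erase i, update V i u j = V j := fun j hj ↦
    update_of_ne (ne_of_mem_erase hj) u V
  have linear_part : ∑ j ∈ univ.erase i, b i j • update V i u j =
      ∑ j ∈ univ.erase i, b i j • V j :=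
    sum_congr rfl fun j hj ↦ by rw [update_eq j hj]
  have constant_part :
      ∑ x ∈ univ.erase i, ∑ y ∈ univ.erase i, b x y * ⟪update V i u x, update V i u y⟫ =
        ∑ x ∈ univ.erase i, ∑ y ∈ univ.erase i, b x y * ⟪V x, V y⟫ :=
    sum_congr rfl fun x hx ↦ sum_congr rfl fun y hy ↦ by rw [update_eq x hx, update_eq y hy]
  rw [pairEnergy_eq_add_sum_erase hb _ i, pairEnergy_eq_add_sum_erase hb V i, linear_part,
    constant_part, update_self, inner_sub_left]
  ring

end PairEnergy

theorem sq_norm_sub_le_two_mul_inner {E : Type*} [NormedAddCommGroup E] [InnerProductSpace ℝ E]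
    {p v g : E} (h : ‖p - (v + g)‖ ≤ ‖v - (v + g)‖) : ‖p - v‖ ^ 2 ≤ 2 * ⟪p - v, g⟫ := by
  rw [← sub_sub, sub_add_cancel_left, norm_neg] at h
  have h_sq : ‖p - v - g‖ ^ 2 ≤ ‖g‖ ^ 2 := by gcongr
  rw [norm_sub_sq_real] at h_sq
  linarith

section Qfun

variable {n r : ℕ} {b : Fin n → Fin n → ℝ} {m : ℝ} {V : Fin n → EuclideanSpace ℝ (Fin r)}

theorem Qfun_eq_pairEnergy : Qfun b m V = 1 / (2 * m) * pairEnergy b V := by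
  simp [Qfun, pairEnergy, PiLp.inner_apply, mul_comm]

theorem Qfun_update_sub (hb : ∀ i j, b i j = b j i) {i : Fin n} {u : EuclideanSpace ℝ (Fin r)}
    (hu : ‖u‖ = ‖V i‖) :
    Qfun b m (update V i u) - Qfun b m V = ⟪u - V i, gradBlock b m V i⟫ := by
  rw [Qfun_eq_pairEnergy, Qfun_eq_pairEnergy, ← mul_sub, pairEnergy_update_sub hb, hu, gradBlock,
    real_inner_smul_right]
  ring

theorem sq_norm_proj_sub_le_two_mul_Qfun_update_sub (hb : ∀ i j, b i j = b j i) {i : Fin n}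
    {K : Set (EuclideanSpace ℝ (Fin r))} {ρ : ℝ} (hK : K ⊆ Metric.sphere 0 ρ) (hV : V i ∈ K)
    {p w : EuclideanSpace ℝ (Fin r)} (hpK : p ∈ K)
    (hp : IsMinOn (fun u ↦ ‖u - (V i + gradBlock b m V i)‖) K p)
    (hw : IsMaxOn (fun u ↦ Qfun b m (update V i u)) K w) :
    ‖p - V i‖ ^ 2 ≤ 2 * (Qfun b m (update V i w) - Qfun b m V) := by
  have norm_eq : ‖p‖ = ‖V i‖ :=
    (mem_sphere_zero_iff_norm.1 (hK hpK)).trans (mem_sphere_zero_iff_norm.1 (hK hV)).symm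
  calc ‖p - V i‖ ^ 2 ≤ 2 * ⟪p - V i, gradBlock b m V i⟫ := sq_norm_sub_le_two_mul_inner (hp hV)
    _ = 2 * (Qfun b m (update V i p) - Qfun b m V) := by rw [Qfun_update_sub hb norm_eq]
    _ ≤ 2 * (Qfun b m (update V i w) - Qfun b m V) := by gcongr; exact hw hpK

variable {Ω : Fin n → Set (EuclideanSpace ℝ (Fin r))} {ρ : Fin n → ℝ}
  {proj : Fin n → EuclideanSpace ℝ (Fin r) → EuclideanSpace ℝ (Fin r)}
  {w : Fin n → EuclideanSpace ℝ (Fin r)}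

theorem gradNormSq_le_expect_Qfun_update_sub (hb : ∀ i j, b i j = b j i)
    (hΩ : ∀ i, Ω i ⊆ Metric.sphere 0 (ρ i)) (hV : ∀ i, V i ∈ Ω i)
    (hproj_mem : ∀ i z, proj i z ∈ Ω i) (hproj : ∀ i z, IsMinOn (fun u ↦ ‖u - z‖) (Ω i) (proj i z))
    (hw : ∀ i, IsMaxOn (fun u ↦ Qfun b m (update V i u)) (Ω i) (w i)) :
    gradNormSq b m proj V ≤ 2 * n * ((𝔼 i, Qfun b m (update V i (w i))) - Qfun b m V) := by
  calc gradNormSq b m proj V ≤ ∑ i, 2 * (Qfun b m (update V i (w i)) - Qfun b m V) :=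
        sum_le_sum fun i _ ↦ sq_norm_proj_sub_le_two_mul_Qfun_update_sub hb (hΩ i) (hV i)
          (hproj_mem i _) (hproj i _) (hw i)
    _ = 2 * (n * (𝔼 i, Qfun b m (update V i (w i))) - n * Qfun b m V) := by
        have card_mul_expect := Fintype.card_mul_expect fun i ↦ Qfun b m (update V i (w i))
        rw [Fintype.card_fin] at card_mul_expect
        rw [card_mul_expect, ← mul_sum, sum_sub_distrib, Fin.sum_const, nsmul_eq_mul]
    _ = 2 * n * ((𝔼 i, Qfun b m (update V i (w i))) - Qfun b m V) := by ring

end Qfun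

theorem stmt_17_general {n r : ℕ} (hn : 0 < n) {b : Fin n → Fin n → ℝ}
    (hb : ∀ i j, b i j = b j i) {m : ℝ} (_hm : m ≠ 0)
    {Ω : Fin n → Set (EuclideanSpace ℝ (Fin r))} {ρ : Fin n → ℝ}
    (hΩ : ∀ i, Ω i ⊆ Metric.sphere 0 (ρ i))
    {B : ℝ} (hB : ∀ V, (∀ i, V i ∈ Ω i) → Qfun b m V ≤ B)
    {sel : (Fin n → EuclideanSpace ℝ (Fin r)) → Fin n → EuclideanSpace ℝ (Fin r)}
    (hsel_mem : ∀ V i, sel V i ∈ Ω i)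
    (hsel : ∀ V i, IsMaxOn (fun u ↦ Qfun b m (update V i u)) (Ω i) (sel V i))
    {proj : Fin n → EuclideanSpace ℝ (Fin r) → EuclideanSpace ℝ (Fin r)}
    (hproj_mem : ∀ i z, proj i z ∈ Ω i) (hproj : ∀ i z, IsMinOn (fun u ↦ ‖u - z‖) (Ω i) (proj i z))
    {V0 : Fin n → EuclideanSpace ℝ (Fin r)} (hV0 : ∀ i, V0 i ∈ Ω i) {T : ℕ} (hT : 0 < T) :
    ∃ t < T,
      (∑ s : Fin t → Fin n,
          gradNormSq b m proj (iter sel V0 ((List.finRange t).map s))) / (n : ℝ) ^ t ≤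
        (2 * n / T) * (B - Qfun b m V0) := by
  have : Nonempty (Fin n) := ⟨⟨0, hn⟩⟩
  have step_mem : ∀ V ∈ {V | ∀ i, V i ∈ Ω i}, ∀ i, update V i (sel V i) ∈ {V | ∀ i, V i ∈ Ω i} :=
    fun V hV i ↦ (forall_update_iff V fun j v ↦ v ∈ Ω j).2 ⟨hsel_mem V i, fun j _ ↦ hV j⟩
  obtain ⟨t, ht, hle⟩ := exists_orbitMean_le_of_drift step_mem hV0 (c := 2 * n) (by positivity) hB
    (fun V hV ↦ gradNormSq_le_expect_Qfun_update_sub hb hΩ hV hproj_mem hproj (hsel V)) hT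
  rw [orbitMean_eq_sum_div, Fintype.card_fin] at hle
  exact ⟨t, ht, hle⟩

/-- Theorem 1 of the paper: Let `Q` be the generalized modularity
objective with symmetric `b` and `m > 0`, `Ω = Ω₁ × ⋯ × Ωₙ` the product of the
low-cardinality feasible sets, and `Q* = max_{V ∈ Ω} Q(V)`. Starting from a feasible
`V⁰`, update at each step a uniformly random coordinate `i_t` by an exact maximizer
(measurable selection `sel`) of `Q` over block `i_t`; the expectation of
`‖grad(V^t)‖² = ‖P_Ω(V^t + ∇Q(V^t)) − V^t‖²` over the i.i.d. uniform indices
`i₀,…,i_{t−1}` is the average of `gradNormSq` over all `n^t` index sequences. Then for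
every `T ≥ 1`, `min_{0 ≤ t < T} E[‖grad(V^t)‖²] ≤ (2n/T)(Q* − Q(V⁰))`; in particular
the expected squared projected gradient converges to zero at an `O(1/T)` rate. -/
theorem stmt_17 {n r k : ℕ} (hn : 0 < n) (hr : 0 < r) (hk : 1 ≤ k) (hkr : k ≤ r)
    (b : Fin n → Fin n → ℝ) (hb : ∀ i j, b i j = b j i) (m : ℝ) (hm : 0 < m)
    (Qstar : ℝ)
    (hQstar : IsGreatest (Qfun b m '' {V : Fin n → EuclideanSpace ℝ (Fin r) |
      ∀ i, V i ∈ feas r k}) Qstar)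
    (sel : (Fin n → EuclideanSpace ℝ (Fin r)) → Fin n → EuclideanSpace ℝ (Fin r))
    (hselmem : ∀ V i, sel V i ∈ feas r k)
    (hselmax : ∀ V i, ∀ u ∈ feas r k,
      Qfun b m (Function.update V i u) ≤ Qfun b m (Function.update V i (sel V i)))
    (proj : Fin n → EuclideanSpace ℝ (Fin r) → EuclideanSpace ℝ (Fin r))
    (hprojmem : ∀ i z, proj i z ∈ feas r k)
    (hprojmin : ∀ i z, ∀ u ∈ feas r k, ‖proj i z - z‖ ≤ ‖u - z‖)
    (V0 : Fin n → EuclideanSpace ℝ (Fin r)) (hV0 : ∀ i, V0 i ∈ feas r k)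
    (T : ℕ) (hT : 1 ≤ T) :
    ∃ t < T,
      (∑ s : Fin t → Fin n,
          gradNormSq b m proj (iter sel V0 ((List.finRange t).map s))) / (n : ℝ) ^ t ≤
        (2 * n / T) * (Qstar - Qfun b m V0) := by
  exact stmt_17_general hn hb hm.ne' (fun i v hv ↦ mem_sphere_zero_iff_norm.2 hv.2.1)
    (fun V hV ↦ hQstar.2 ⟨V, hV, rfl⟩) hselmem hselmax hprojmem hprojmin hV0 hT
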